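/- arXiv:1607.01166 — 3 statements merged into one kernel-verified Lean document; each statement's English description precedes it below -/
import Mathlib

section
/- Let m ≥ 1 be an integer, H₀ ∈ (1 − 1/(2m), 1), H = 1 + m(H₀ − 1) ∈ (1/2, 1), and let L : (0,∞) → (0,∞) be slowly varying at +∞ and bounded away from 0 and +∞ on every compact subset of (0,∞). Let R : (0,∞) → [−1, 1] be measurable with R(x) / (x^{2H₀ − 2} L(x)²) → 1 as x → +∞. Then ( ∫_0^T ∫_0^T R(|s − t|)^m ds dt ) / ( T^{2H} L(T)^{2m} ) → 1 / (H(2H − 1)) as T → +∞. Equivalently, the variance of (1/d(T)) ∫_0^T H_m(g(y)) dy tends to 1 as T → ∞ when g is a centered stationary standard Gaussian process with covariance R, where d(T) = √(m!/(H(2H−1))) · T^H L(T)^m. -/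
open MeasureTheory Filter Set
open scoped Topology

noncomputable section

/-- `L : (0,∞) → (0,∞)` is slowly varying at `+∞`. -/
def SlowlyVaryingAtTop (L : ℝ → ℝ) : Prop :=
  ∀ lam : ℝ, 0 < lam → Tendsto (fun x => L (lam * x) / L x) atTop (𝓝 1)

/-- `L` is bounded away from `0` and `+∞` on every compact subset of `(0,∞)`. -/
def BddAwayOnCompacts (L : ℝ → ℝ) : Prop :=
  ∀ K : Set ℝ, K ⊆ Set.Ioi 0 → IsCompact K →
    ∃ c C : ℝ, 0 < c ∧ ∀ x ∈ K, c ≤ L x ∧ L x ≤ C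

/-!
Karamata's theorem says that if `f x ~ c x ^ ρ l(x)` with `l` slowly varying and `-1 < ρ`, then
`∫₀ᵀ f ~ c / (ρ + 1) * T ^ (ρ + 1) l(T)`, with the *same* `l`. Since the double integral of
`f |s - t|` over `[0, T]²` is twice the iterated primitive of `f`, applying Karamata's theorem
twice with `f = R ^ m`, `l = L ^ (2 * m)` and `ρ = 2 * H - 2` yields the constant
`2 / ((2 * H - 1) * (2 * H)) = 1 / (H * (2 * H - 1))`.

Karamata's theorem (`tendsto_integral_div_rpow_mul`) is dominated convergence after the
substitution `x = T u`. Near `0` the function `f` is only integrable, so it is first truncated to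
`(X, ∞)`, at a cost that is negligible because `T ^ (ρ + 1) l(T)` is unbounded. The dominating
function comes from Potter's bound (`eventually_abs_le_rpow_mul_abs`), which in turn follows from
the uniform convergence theorem for the additive increments of `log ∘ l ∘ exp`.
-/

section ConvergenceInMeasure

variable {α ι E : Type*} [MeasurableSpace α] {μ : Measure α} [IsFiniteMeasure μ]
  [PseudoEMetricSpace E]

theorem tendstoInMeasure_of_tendsto_ae_of_isCountablyGenerated {l : Filter ι}
    [l.IsCountablyGenerated] {f : ι → α → E} {g : α → E}
    (hf : ∀ i, AEStronglyMeasurable (f i) μ)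
    (hfg : ∀ᵐ x ∂μ, Tendsto (fun i => f i x) l (𝓝 (g x))) : TendstoInMeasure μ f l g :=
  fun ε hε => tendsto_of_seq_tendsto fun _ hu =>
    tendstoInMeasure_of_tendsto_ae (fun _ => hf _) (hfg.mono fun _ hx => hx.comp hu) ε hε

end ConvergenceInMeasure

section AdditiveIncrements

variable {h : ℝ → ℝ}

theorem tendsto_volume_inter_setOf_le_abs_add_sub (hh : Measurable h)
    (hlim : ∀ t, Tendsto (fun x => h (x + t) - h x) atTop (𝓝 0)) {ε : ℝ} (hε : 0 < ε) (a b : ℝ) :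
    Tendsto (fun x => volume ({t | ε ≤ |h (x + t) - h x|} ∩ Icc a b)) atTop (𝓝 0) := by
  have hmeas : TendstoInMeasure (volume.restrict (Icc a b)) (fun x t => h (x + t) - h x) atTop 0 :=
    tendstoInMeasure_of_tendsto_ae_of_isCountablyGenerated
      (fun x => Measurable.aestronglyMeasurable (by fun_prop)) (Eventually.of_forall hlim)
  refine (tendstoInMeasure_iff_norm.1 hmeas ε hε).congr fun x => ?_
  simp only [Pi.zero_apply, sub_zero, Real.norm_eq_abs]
  exact Measure.restrict_apply' measurableSet_Icc

theorem exists_abs_add_sub_lt_of_volume_inter_lt {ε b x t : ℝ} (ht : t ∈ Icc (-b) b)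
    (hx : volume ({u | ε ≤ |h (x + u) - h x|} ∩ Icc 0 (2 * b + 1)) < 1 / 2)
    (hxt : volume ({u | ε ≤ |h (x + t + u) - h (x + t)|} ∩ Icc 0 (2 * b + 1)) < 1 / 2) :
    ∃ u, |h (x + u) - h x| < ε ∧ |h (x + u) - h (x + t)| < ε := by
  by_contra! hbad
  -- Otherwise `[b, b + 1]` is covered by the first bad set and the `t`-translate of the second.
  have hcover : Icc b (b + 1) ⊆ ({u | ε ≤ |h (x + u) - h x|} ∩ Icc 0 (2 * b + 1)) ∪
      (· + -t) ⁻¹' ({u | ε ≤ |h (x + t + u) - h (x + t)|} ∩ Icc 0 (2 * b + 1)) := by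
    intro u hu
    rcases lt_or_ge |h (x + u) - h x| ε with hlt | hge
    · refine .inr ⟨?_, by linarith [hu.1, ht.2], by linarith [hu.2, ht.1]⟩
      simpa only [mem_ofPred_eq, ← sub_eq_add_neg, add_add_sub_cancel] using hbad u hlt
    · exact .inl ⟨hge, by linarith [hu.1, ht.1, ht.2], by linarith [hu.2, ht.1, ht.2]⟩
  have hlt : volume (Icc b (b + 1)) < 1 := calc
    volume (Icc b (b + 1)) ≤ _ := (measure_mono hcover).trans (measure_union_le _ _)
    _ < 1 / 2 + 1 / 2 := by
      rw [measure_preimage_add_right]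
      exact ENNReal.add_lt_add hx hxt
    _ = 1 := ENNReal.add_halves 1
  simp at hlt

theorem tendstoUniformlyOn_add_sub (hh : Measurable h)
    (hlim : ∀ t, Tendsto (fun x => h (x + t) - h x) atTop (𝓝 0)) (b : ℝ) :
    TendstoUniformlyOn (fun x t => h (x + t) - h x) 0 atTop (Icc (-b) b) := by
  rw [Metric.tendstoUniformlyOn_iff]
  intro ε hε
  obtain ⟨X, hX⟩ := eventually_atTop.1 <|
    (tendsto_volume_inter_setOf_le_abs_add_sub hh hlim (half_pos hε) 0 (2 * b + 1)).eventually
      (gt_mem_nhds (by norm_num : (0 : ENNReal) < 1 / 2))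
  filter_upwards [eventually_ge_atTop (X + b), eventually_ge_atTop X] with x hxb hx t ht
  obtain ⟨u, hux, huxt⟩ := exists_abs_add_sub_lt_of_volume_inter_lt ht (hX x hx)
    (hX (x + t) (by linarith [ht.1]))
  calc dist 0 (h (x + t) - h x) = |h (x + t) - h x| := by rw [dist_comm, Real.dist_0_eq_abs]
    _ ≤ |h (x + t) - h (x + u)| + |h (x + u) - h x| := abs_sub_le _ _ _
    _ < ε := by rw [abs_sub_comm (h (x + t))]; linarith

theorem abs_add_sub_le_natCast_mul {ε X : ℝ}
    (hX : ∀ x ≥ X, ∀ t ∈ Icc (0 : ℝ) 1, |h (x + t) - h x| ≤ ε) (n : ℕ) :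
    ∀ x ≥ X, ∀ t ∈ Icc (0 : ℝ) n, |h (x + t) - h x| ≤ n * ε := by
  induction n with
  | zero =>
    intro x _ t ht
    obtain rfl : t = 0 := by simpa using ht
    simp
  | succ n ih =>
    intro x hx t ht
    push_cast at ht ⊢
    have hε : 0 ≤ ε := (abs_nonneg _).trans (hX x hx 0 (by simp))
    rcases le_total t 1 with ht1 | ht1
    · nlinarith [hX x hx t ⟨ht.1, ht1⟩, n.cast_nonneg (α := ℝ)]
    · have hfirst := hX x hx 1 (by simp)
      have hrest := ih (x + 1) (by linarith) (t - 1) ⟨by linarith, by linarith [ht.2]⟩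
      rw [add_add_sub_cancel] at hrest
      linarith [abs_sub_le (h (x + t)) (h (x + 1)) (h x)]

theorem eventually_abs_add_sub_le_mul_add_one (hh : Measurable h)
    (hlim : ∀ t, Tendsto (fun x => h (x + t) - h x) atTop (𝓝 0)) {ε : ℝ} (hε : 0 < ε) :
    ∀ᶠ x in atTop, ∀ t ≥ 0, |h (x + t) - h x| ≤ ε * (t + 1) := by
  obtain ⟨X, hX⟩ := eventually_atTop.1 <|
    Metric.tendstoUniformlyOn_iff.1 (tendstoUniformlyOn_add_sub hh hlim 1) ε hε
  have hunit : ∀ x ≥ X, ∀ t ∈ Icc (0 : ℝ) 1, |h (x + t) - h x| ≤ ε := fun x hx t ht => by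
    have := hX x hx t ⟨by linarith [ht.1], ht.2⟩
    rw [Pi.zero_apply, dist_comm, Real.dist_0_eq_abs] at this
    exact this.le
  filter_upwards [eventually_ge_atTop X] with x hx t ht
  calc |h (x + t) - h x| ≤ ⌈t⌉₊ * ε :=
        abs_add_sub_le_natCast_mul hunit ⌈t⌉₊ x hx t ⟨ht, Nat.le_ceil t⟩
    _ ≤ (t + 1) * ε := by gcongr; exact (Nat.ceil_lt_add_one ht).le
    _ = ε * (t + 1) := mul_comm _ _

end AdditiveIncrements

namespace SlowlyVaryingAtTop

variable {l : ℝ → ℝ}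

protected theorem pow (hl : SlowlyVaryingAtTop l) (n : ℕ) :
    SlowlyVaryingAtTop fun x => l x ^ n := fun lam hlam => by
  simpa only [div_pow, one_pow] using (hl lam hlam).pow n

-- If `l x = 0` then the junk value of `l (1 * x) / l x` is `0`, which is not close to `1`.
theorem eventually_ne_zero (hl : SlowlyVaryingAtTop l) : ∀ᶠ x in atTop, l x ≠ 0 :=
  ((hl 1 one_pos).eventually_ne one_ne_zero).mono fun _ hx => (div_ne_zero_iff.1 hx).2

theorem tendsto_log_comp_exp_add_sub (hl : SlowlyVaryingAtTop l) (t : ℝ) :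
    Tendsto (fun x => Real.log (l (Real.exp (x + t))) - Real.log (l (Real.exp x))) atTop (𝓝 0) := by
  have hratio : Tendsto (fun x => l (Real.exp t * Real.exp x) / l (Real.exp x)) atTop (𝓝 1) :=
    (hl (Real.exp t) (Real.exp_pos t)).comp Real.tendsto_exp_atTop
  have hlog := hratio.log one_ne_zero
  rw [Real.log_one] at hlog
  refine hlog.congr' ?_
  filter_upwards [hratio.eventually_ne one_ne_zero] with x hx
  obtain ⟨hnum, hden⟩ := div_ne_zero_iff.1 hx
  rw [Real.log_div hnum hden, add_comm x t, Real.exp_add]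

theorem eventually_abs_le_rpow_mul_abs (hl : SlowlyVaryingAtTop l) (hlm : Measurable l) {δ : ℝ}
    (hδ : 0 < δ) :
    ∀ᶠ s in atTop, ∀ T ≥ s, |l s| ≤ Real.exp δ * (T / s) ^ δ * |l T| := by
  have hlog := Real.tendsto_log_atTop.eventually <|
    eventually_abs_add_sub_le_mul_add_one (h := fun x => Real.log (l (Real.exp x)))
      (by fun_prop) hl.tendsto_log_comp_exp_add_sub hδ
  obtain ⟨X, hX⟩ := eventually_atTop.1 hl.eventually_ne_zero
  filter_upwards [hlog, eventually_ge_atTop X, eventually_gt_atTop 0] with s hs hsX hs0 T hsT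
  have hT0 : 0 < T := hs0.trans_le hsT
  have hdiff := hs (Real.log T - Real.log s) (sub_nonneg.2 (Real.log_le_log hs0 hsT))
  rw [add_sub_cancel, Real.exp_log hs0, Real.exp_log hT0] at hdiff
  have hle : Real.log (l s) ≤ δ + (Real.log T - Real.log s) * δ + Real.log (l T) := by
    linarith [(abs_le.1 hdiff).1]
  calc |l s| = Real.exp (Real.log (l s)) := (Real.exp_log_eq_abs (hX s hsX)).symm
    _ ≤ Real.exp (δ + (Real.log T - Real.log s) * δ + Real.log (l T)) := Real.exp_le_exp.2 hle
    _ = Real.exp δ * (T / s) ^ δ * |l T| := by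
      rw [Real.exp_add, Real.exp_add, Real.exp_log_eq_abs (hX T (hsX.trans hsT)),
        Real.rpow_def_of_pos (div_pos hT0 hs0), Real.log_div hT0.ne' hs0.ne']

theorem tendsto_rpow_mul_abs_atTop (hl : SlowlyVaryingAtTop l) (hlm : Measurable l) {ρ : ℝ}
    (hρ : 0 < ρ) : Tendsto (fun x => x ^ ρ * |l x|) atTop atTop := by
  obtain ⟨X, hPotter, hlX, hX⟩ := ((hl.eventually_abs_le_rpow_mul_abs hlm (half_pos hρ)).and
    (hl.eventually_ne_zero.and (eventually_gt_atTop 0))).exists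
  have hK : 0 < X ^ (ρ / 2) * |l X| / Real.exp (ρ / 2) := by positivity
  refine tendsto_atTop_mono' _ ?_ ((tendsto_rpow_atTop (half_pos hρ)).const_mul_atTop hK)
  filter_upwards [eventually_ge_atTop X] with T hT
  have hT0 : 0 < T := hX.trans_le hT
  calc X ^ (ρ / 2) * |l X| / Real.exp (ρ / 2) * T ^ (ρ / 2)
      ≤ X ^ (ρ / 2) * (Real.exp (ρ / 2) * (T / X) ^ (ρ / 2) * |l T|) / Real.exp (ρ / 2)
          * T ^ (ρ / 2) := by gcongr; exact hPotter T hT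
    _ = T ^ (ρ / 2) * T ^ (ρ / 2) * |l T| := by
      rw [Real.div_rpow hT0.le hX.le]
      field_simp
    _ = T ^ ρ * |l T| := by rw [← Real.rpow_add hT0, add_halves]

variable {f : ℝ → ℝ} {ρ c : ℝ}

theorem tendsto_comp_mul_div_rpow_mul (hl : SlowlyVaryingAtTop l)
    (hf : Tendsto (fun x => f x / (x ^ ρ * l x)) atTop (𝓝 c)) {u : ℝ} (hu : 0 < u) :
    Tendsto (fun T => f (T * u) / (T ^ ρ * l T)) atTop (𝓝 (c * u ^ ρ)) := by
  have hscaled := hf.comp (tendsto_id.atTop_mul_const hu)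
  have hprod := (hscaled.mul (hl u hu)).mul_const (u ^ ρ)
  rw [mul_one] at hprod
  refine hprod.congr' ?_
  filter_upwards [eventually_gt_atTop 0, (hl u hu).eventually_ne one_ne_zero] with T hT hratio
  obtain ⟨hlTu, hlT⟩ := div_ne_zero_iff.1 hratio
  simp only [Function.comp_apply, id_eq]
  rw [mul_comm u T] at hlTu ⊢
  rw [Real.mul_rpow hT.le hu.le]
  field_simp

theorem eventually_abs_indicator_Ioi_div_le (hl : SlowlyVaryingAtTop l) (hlm : Measurable l)
    (hf : Tendsto (fun x => f x / (x ^ ρ * l x)) atTop (𝓝 c)) {δ : ℝ} (hδ : 0 < δ) :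
    ∀ᶠ X in atTop, ∀ T > 0, ∀ u ∈ Ioc (0 : ℝ) 1,
      |(Ioi X).indicator f (T * u) / (T ^ ρ * l T)|
        ≤ (|c| + 1) * Real.exp δ * u ^ (ρ - δ) := by
  have hbound := hf.abs.eventually (gt_mem_nhds (lt_add_one |c|))
  obtain ⟨X₀, hX₀⟩ := eventually_atTop.1 <|
    hbound.and ((hl.eventually_abs_le_rpow_mul_abs hlm hδ).and hl.eventually_ne_zero)
  filter_upwards [eventually_ge_atTop X₀] with X hX T hT u hu
  have hu0 : 0 < u := hu.1
  by_cases hTu : X < T * u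
  swap
  · rw [indicator_of_notMem (by simpa using hTu), zero_div, abs_zero]
    positivity
  have hTuT : T * u ≤ T := mul_le_of_le_one_right hT.le hu.2
  obtain ⟨hfle, hPotter, hlTu⟩ := hX₀ (T * u) (hX.trans hTu.le)
  have hlT : 0 < |l T| := abs_pos.2 (hX₀ T (hX.trans (hTu.le.trans hTuT))).2.2
  have hTu_pos : 0 < (T * u) ^ ρ := by positivity
  rw [abs_div, abs_mul, abs_of_pos hTu_pos,
    div_lt_iff₀ (mul_pos hTu_pos (abs_pos.2 hlTu))] at hfle
  have hPotter' := hPotter T hTuT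
  rw [div_mul_cancel_left₀ hT.ne', Real.inv_rpow hu0.le, ← Real.rpow_neg hu0.le] at hPotter'
  rw [indicator_of_mem (mem_Ioi.2 hTu), abs_div, abs_mul, abs_of_pos (Real.rpow_pos_of_pos hT ρ),
    div_le_iff₀ (by positivity)]
  calc |f (T * u)| ≤ (|c| + 1) * ((T * u) ^ ρ * |l (T * u)|) := hfle.le
    _ ≤ (|c| + 1) * ((T * u) ^ ρ * (Real.exp δ * u ^ (-δ) * |l T|)) := by gcongr
    _ = (|c| + 1) * Real.exp δ * u ^ (ρ - δ) * (T ^ ρ * |l T|) := by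
      rw [Real.mul_rpow hT.le hu0.le, sub_eq_add_neg, Real.rpow_add hu0]
      ring

theorem eventually_tendsto_integral_indicator_Ioi_div (hl : SlowlyVaryingAtTop l)
    (hlm : Measurable l) (hρ : -1 < ρ) (hfint : ∀ x > 0, IntervalIntegrable f volume 0 x)
    (hf : Tendsto (fun x => f x / (x ^ ρ * l x)) atTop (𝓝 c)) :
    ∀ᶠ X in atTop, Tendsto
      (fun T => ∫ u in (0 : ℝ)..1, (Ioi X).indicator f (T * u) / (T ^ ρ * l T)) atTop
      (𝓝 (c / (ρ + 1))) := by
  obtain ⟨δ, hδ, hδρ⟩ : ∃ δ > 0, -1 < ρ - δ := ⟨(ρ + 1) / 2, by linarith, by linarith⟩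
  filter_upwards [hl.eventually_abs_indicator_Ioi_div_le hlm hf hδ] with X hdom
  have hintegral : ∫ u in (0 : ℝ)..1, c * u ^ ρ = c / (ρ + 1) := by
    rw [intervalIntegral.integral_const_mul, integral_rpow (.inl hρ), Real.one_rpow,
      Real.zero_rpow (by linarith), sub_zero, mul_one_div]
  rw [← hintegral]
  refine intervalIntegral.tendsto_integral_filter_of_dominated_convergence
    (fun u => (|c| + 1) * Real.exp δ * u ^ (ρ - δ)) ?_ ?_
    ((intervalIntegral.intervalIntegrable_rpow' hδρ).const_mul _) ?_
  · filter_upwards [eventually_gt_atTop 0] with T hT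
    have hcomp : IntervalIntegrable (fun u => f (T * u)) volume 0 1 := by
      simpa only [zero_div, div_self hT.ne'] using (hfint T hT).comp_mul_left (c := T)
    rw [uIoc_of_le zero_le_one]
    simp only [div_eq_mul_inv]
    exact (hcomp.1.aestronglyMeasurable.indicator
      (measurableSet_Ioi.preimage (measurable_const_mul T))).mul_const _
  · filter_upwards [eventually_gt_atTop 0] with T hT
    refine Eventually.of_forall fun u hu => ?_
    rw [uIoc_of_le zero_le_one] at hu
    exact hdom T hT u hu
  · refine Eventually.of_forall fun u hu => ?_
    rw [uIoc_of_le zero_le_one] at hu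
    refine hl.tendsto_comp_mul_div_rpow_mul (hf.congr' ?_) hu.1
    filter_upwards [eventually_gt_atTop X] with x hx
    rw [indicator_of_mem (mem_Ioi.2 hx)]

theorem tendsto_integral_div_rpow_mul (hl : SlowlyVaryingAtTop l) (hlm : Measurable l)
    (hρ : -1 < ρ) (hfint : ∀ x > 0, IntervalIntegrable f volume 0 x)
    (hf : Tendsto (fun x => f x / (x ^ ρ * l x)) atTop (𝓝 c)) :
    Tendsto (fun T => (∫ x in (0 : ℝ)..T, f x) / (T ^ (ρ + 1) * l T)) atTop
      (𝓝 (c / (ρ + 1))) := by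
  obtain ⟨X, htail, hX⟩ := ((hl.eventually_tendsto_integral_indicator_Ioi_div hlm hρ hfint hf).and
    (eventually_gt_atTop 0)).exists
  have hhead : Tendsto (fun T => (∫ x in (0 : ℝ)..X, f x) / (T ^ (ρ + 1) * l T)) atTop (𝓝 0) := by
    have hnorm : Tendsto (fun T => ‖T ^ (ρ + 1) * l T‖) atTop atTop := by
      refine (hl.tendsto_rpow_mul_abs_atTop hlm (neg_lt_iff_pos_add.1 hρ)).congr' ?_
      filter_upwards [eventually_ge_atTop 0] with T hT
      rw [norm_mul, Real.norm_of_nonneg (Real.rpow_nonneg hT _), Real.norm_eq_abs]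
    simpa only [mul_zero, div_eq_mul_inv, Function.comp_def] using (tendsto_inv₀_cobounded.comp
      (tendsto_norm_atTop_iff_cobounded.1 hnorm)).const_mul (∫ x in (0 : ℝ)..X, f x)
  have hsum := hhead.add htail
  rw [zero_add] at hsum
  refine hsum.congr' ?_
  filter_upwards [eventually_ge_atTop X] with T hXT
  have hT : 0 < T := hX.trans_le hXT
  have hind : ∫ x in (0 : ℝ)..T, (Ioi X).indicator f x = ∫ x in X..T, f x := by
    rw [intervalIntegral.integral_of_le hT.le, intervalIntegral.integral_of_le hXT,
      setIntegral_indicator measurableSet_Ioi, Ioc_inter_Ioi, max_eq_right hX.le]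
  have hsplit := intervalIntegral.integral_add_adjacent_intervals (hfint X hX)
    ((hfint X hX).symm.trans (hfint T hT))
  rw [intervalIntegral.integral_div,
    intervalIntegral.integral_comp_mul_left (fun x => (Ioi X).indicator f x) hT.ne', mul_zero,
    mul_one, hind, ← hsplit, Real.rpow_add_one hT.ne', smul_eq_mul]
  field_simp

end SlowlyVaryingAtTop

section DoubleIntegral

variable {E : Type*} [NormedAddCommGroup E] [NormedSpace ℝ E] {f : ℝ → E} {T : ℝ}

theorem intervalIntegrable_primitive {a b : ℝ} (hf : IntervalIntegrable f volume a b) :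
    IntervalIntegrable (fun s => ∫ u in a..s, f u) volume a b :=
  (intervalIntegral.continuousOn_primitive_interval' hf left_mem_uIcc).intervalIntegrable

theorem integral_abs_sub_eq_add (hf : IntervalIntegrable f volume 0 T) {s : ℝ}
    (hs : s ∈ Icc 0 T) :
    ∫ t in (0 : ℝ)..T, f |s - t| = (∫ u in (0 : ℝ)..s, f u) + ∫ u in (0 : ℝ)..(T - s), f u := by
  have hleft : EqOn (fun t => f (s - t)) (fun t => f |s - t|) (uIcc 0 s) := fun t ht => by
    rw [uIcc_of_le hs.1] at ht
    simp only [abs_of_nonneg (sub_nonneg.2 ht.2)]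
  have hright : EqOn (fun t => f (t - s)) (fun t => f |s - t|) (uIcc s T) := fun t ht => by
    rw [uIcc_of_le hs.2] at ht
    simp only [abs_sub_comm s t, abs_of_nonneg (sub_nonneg.2 ht.1)]
  have hf_left : IntervalIntegrable f volume 0 s :=
    hf.mono_set (uIcc_subset_uIcc_left (by rwa [uIcc_of_le (hs.1.trans hs.2)]))
  have hf_right : IntervalIntegrable f volume 0 (T - s) :=
    hf.mono_set (uIcc_subset_uIcc_left (by
      rw [uIcc_of_le (hs.1.trans hs.2)]
      exact ⟨sub_nonneg.2 hs.2, sub_le_self T hs.1⟩))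
  have hint_left : IntervalIntegrable (fun t => f |s - t|) volume 0 s := by
    refine .congr (hleft.mono uIoc_subset_uIcc) ?_
    simpa using (hf_left.comp_sub_left s).symm
  have hint_right : IntervalIntegrable (fun t => f |s - t|) volume s T := by
    refine .congr (hright.mono uIoc_subset_uIcc) ?_
    simpa using hf_right.comp_sub_right s
  rw [← intervalIntegral.integral_add_adjacent_intervals hint_left hint_right,
    ← intervalIntegral.integral_congr hleft, ← intervalIntegral.integral_congr hright,
    intervalIntegral.integral_comp_sub_left f, intervalIntegral.integral_comp_sub_right f,
    sub_self, sub_zero]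

theorem integral_integral_abs_sub (hT : 0 ≤ T) (hf : IntervalIntegrable f volume 0 T) :
    ∫ s in (0 : ℝ)..T, ∫ t in (0 : ℝ)..T, f |s - t| =
      (2 : ℝ) • ∫ s in (0 : ℝ)..T, ∫ u in (0 : ℝ)..s, f u := by
  have hprim := intervalIntegrable_primitive hf
  have hreflect : IntervalIntegrable (fun s => ∫ u in (0 : ℝ)..(T - s), f u) volume 0 T := by
    simpa using (hprim.comp_sub_left T).symm
  calc ∫ s in (0 : ℝ)..T, ∫ t in (0 : ℝ)..T, f |s - t|
      = ∫ s in (0 : ℝ)..T, ((∫ u in (0 : ℝ)..s, f u) + ∫ u in (0 : ℝ)..(T - s), f u) :=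
        intervalIntegral.integral_congr fun s hs =>
          integral_abs_sub_eq_add hf (by rwa [uIcc_of_le hT] at hs)
    _ = (2 : ℝ) • ∫ s in (0 : ℝ)..T, ∫ u in (0 : ℝ)..s, f u := by
      rw [intervalIntegral.integral_add hprim hreflect,
        intervalIntegral.integral_comp_sub_left (fun s => ∫ u in (0 : ℝ)..s, f u), sub_self,
        sub_zero, two_smul]

end DoubleIntegral

theorem SlowlyVaryingAtTop.tendsto_integral_integral_abs_sub_div {l f : ℝ → ℝ} {ρ c : ℝ}
    (hl : SlowlyVaryingAtTop l) (hlm : Measurable l) (hρ : -1 < ρ)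
    (hfint : ∀ x > 0, IntervalIntegrable f volume 0 x)
    (hf : Tendsto (fun x => f x / (x ^ ρ * l x)) atTop (𝓝 c)) :
    Tendsto (fun T => (∫ s in (0 : ℝ)..T, ∫ t in (0 : ℝ)..T, f |s - t|) / (T ^ (ρ + 2) * l T))
      atTop (𝓝 (2 * (c / (ρ + 1) / (ρ + 2)))) := by
  have honce := hl.tendsto_integral_div_rpow_mul hlm hρ hfint hf
  have htwice := hl.tendsto_integral_div_rpow_mul hlm (by linarith)
    (fun x hx => intervalIntegrable_primitive (hfint x hx)) honce
  rw [show ρ + 1 + 1 = ρ + 2 by ring] at htwice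
  refine (htwice.const_mul 2).congr' ?_
  filter_upwards [eventually_gt_atTop 0] with T hT
  rw [integral_integral_abs_sub hT.le (hfint T hT), smul_eq_mul, mul_div_assoc]

theorem tendsto_pow_div_rpow_mul_pow {R L : ℝ → ℝ} {a c : ℝ} {k : ℕ}
    (hR : Tendsto (fun x => R x / (x ^ a * L x ^ k)) atTop (𝓝 c)) (m : ℕ) :
    Tendsto (fun x => R x ^ m / (x ^ (a * m) * L x ^ (k * m))) atTop (𝓝 (c ^ m)) := by
  refine (hR.pow m).congr' ?_
  filter_upwards [eventually_ge_atTop 0] with x hx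
  rw [div_pow, mul_pow, ← pow_mul, Real.rpow_mul_natCast hx]

theorem intervalIntegrable_pow_of_abs_le {R : ℝ → ℝ} {C a b : ℝ} (hR : Measurable R) (hab : a ≤ b)
    (hC : ∀ x ∈ Ioc a b, |R x| ≤ C) (m : ℕ) :
    IntervalIntegrable (fun x => R x ^ m) volume a b := by
  rw [intervalIntegrable_iff_integrableOn_Ioc_of_le hab]
  refine Measure.integrableOn_of_bounded (M := C ^ m) measure_Ioc_lt_top.ne
    (hR.pow_const m).aestronglyMeasurable ?_
  filter_upwards [ae_restrict_mem measurableSet_Ioc] with x hx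
  rw [norm_pow]
  exact pow_le_pow_left₀ (norm_nonneg _) (hC x hx) m

theorem one_half_lt_one_add_mul_sub_one {m H₀ : ℝ} (hm : 0 < m) (hH₀ : 1 - 1 / (2 * m) < H₀) :
    1 / 2 < 1 + m * (H₀ - 1) := by
  have := mul_lt_mul_of_pos_left hH₀ hm
  have : m * (1 - 1 / (2 * m)) = m - 1 / 2 := by field_simp
  linarith

theorem variance_normalization_general
    (m : ℕ) (H₀ H : ℝ) (hH_half : 1 / 2 < H) (hH : H = 1 + m * (H₀ - 1))
    (L : ℝ → ℝ) (hLmeas : Measurable L) (hLslow : SlowlyVaryingAtTop L)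
    (R : ℝ → ℝ) (hRint : ∀ T > 0, IntervalIntegrable (fun x => R x ^ m) volume 0 T)
    (hRasymp : Tendsto (fun x => R x / (x ^ (2 * H₀ - 2) * L x ^ 2)) atTop (𝓝 1)) :
    Tendsto
      (fun T : ℝ =>
        (∫ s in (0 : ℝ)..T, ∫ t in (0 : ℝ)..T, R |s - t| ^ m) / (T ^ (2 * H) * L T ^ (2 * m)))
      atTop (𝓝 (1 / (H * (2 * H - 1)))) := by
  have hpow := tendsto_pow_div_rpow_mul_pow hRasymp m
  rw [one_pow, show (2 * H₀ - 2) * m = 2 * H - 2 by rw [hH]; ring] at hpow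
  have hlim := (hLslow.pow (2 * m)).tendsto_integral_integral_abs_sub_div (hLmeas.pow_const _)
    (by linarith) hRint hpow
  have hconst : 2 * (1 / (2 * H - 2 + 1) / (2 * H)) = 1 / (H * (2 * H - 1)) := by
    rw [show 2 * H - 2 + 1 = 2 * H - 1 by ring]
    have : 2 * H - 1 ≠ 0 := by linarith
    field_simp
  rwa [sub_add_cancel, hconst] at hlim

/-- Identification of the normalization `d(T)² = (m!/(H(2H-1))) T^{2H} L(T)^{2m}` in Taqqu's
theorem: if `R(x)/(x^{2H₀-2}L(x)²) → 1`, then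
`(∫_0^T ∫_0^T R(|s-t|)^m ds dt) / (T^{2H} L(T)^{2m}) → 1/(H(2H-1))` as `T → ∞`.
Via `E[H_m(g(s))H_m(g(t))] = m! R(|s-t|)^m`, this says that the variance of
`(1/d(T)) ∫_0^T H_m(g(y)) dy` tends to `1`. -/
theorem variance_normalization
    (m : ℕ) (hm : 1 ≤ m) (H₀ H : ℝ) (hH₀ : H₀ ∈ Set.Ioo (1 - 1 / (2 * (m : ℝ))) 1)
    (hH : H = 1 + m * (H₀ - 1))
    (L : ℝ → ℝ) (hLpos : ∀ x > 0, 0 < L x) (hLmeas : Measurable L)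
    (hLslow : SlowlyVaryingAtTop L) (hLbdd : BddAwayOnCompacts L)
    (R : ℝ → ℝ) (hRmeas : Measurable R) (hR1 : ∀ x > 0, R x ∈ Set.Icc (-1 : ℝ) 1)
    (hRasymp : Tendsto (fun x => R x / (x ^ (2 * H₀ - 2) * L x ^ 2)) atTop (𝓝 1)) :
    Tendsto
      (fun T : ℝ =>
        (∫ s in (0 : ℝ)..T, ∫ t in (0 : ℝ)..T, R |s - t| ^ m) / (T ^ (2 * H) * L T ^ (2 * m)))
      atTop (𝓝 (1 / (H * (2 * H - 1)))) := by
  exact variance_normalization_general m H₀ H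
    (hH ▸ one_half_lt_one_add_mul_sub_one (Nat.cast_pos.2 hm) hH₀.1) hH L hLmeas hLslow R
    (fun _ hT => intervalIntegrable_pow_of_abs_le hRmeas hT.le
      (fun x hx => abs_le.2 (hR1 x hx.1)) m) hRasymp

end
end

section
/- Let ν be the standard Gaussian measure on ℝ. For every t ≥ 0, every nonnegative integer k and every x ∈ ℝ, ∫_ℝ H_k( e^{−t} x + √(1 − e^{−2t}) y ) ν(dy) = e^{−kt} H_k(x). In other words, the Ornstein–Uhlenbeck semigroup P_t ψ(x) = ∫_ℝ ψ(e^{−t}x + √(1 − e^{−2t}) y) ν(dy) satisfies P_t H_k = e^{−kt} H_k. -/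
open MeasureTheory ProbabilityTheory Filter Set
open scoped Topology

noncomputable section

/-- The `n`-th probabilists' Hermite polynomial, as a function `ℝ → ℝ`. -/
def hermiteR (n : ℕ) (x : ℝ) : ℝ := Polynomial.aeval x (Polynomial.hermite n)

/-- The standard Gaussian measure on `ℝ`. -/
def stdGaussian : Measure ℝ := gaussianReal 0 1

/-!
If `Y` is standard Gaussian, then `a x + b Y` has law `N(a x, b²)`, so it suffices to integrate
`H_k` against `N(m, v)`. For `Z` with this law, Stein's identity `E[(Z - m) f(Z)] = v E[f'(Z)]` and
the rules `H_{n+2}(z) = z H_{n+1}(z) - (n + 1) H_n(z)` and `H_{n+1}' = (n + 1) H_n` give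
`E[H_{n+2}(Z)] = m E[H_{n+1}(Z)] - (n + 1) (1 - v) E[H_n(Z)]`.
For `m = a x` and `v = 1 - a²` this is the recurrence satisfied by `a ^ n H_n(x)`.
-/

open scoped NNReal

section Hermite

open Polynomial

theorem derivative_hermite_succ (n : ℕ) :
    derivative (hermite (n + 1)) = ((n : ℤ[X]) + 1) * hermite n := by
  induction n with
  | zero => simp
  | succ n ih =>
    rw [hermite_succ (n + 1), derivative_sub, derivative_mul, ih, hermite_succ n]
    simp only [derivative_X, derivative_mul, derivative_add, derivative_natCast, derivative_one,
      Nat.cast_add, Nat.cast_one]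
    ring

theorem hermiteR_zero (x : ℝ) : hermiteR 0 x = 1 := by simp [hermiteR]

theorem hermiteR_one (x : ℝ) : hermiteR 1 x = x := by simp [hermiteR]

theorem hermiteR_succ_succ (n : ℕ) (x : ℝ) :
    hermiteR (n + 2) x = x * hermiteR (n + 1) x - (n + 1) * hermiteR n x := by
  rw [hermiteR, hermite_succ (n + 1), derivative_hermite_succ]
  simp [hermiteR]

theorem hasDerivAt_hermiteR_succ (n : ℕ) (x : ℝ) :
    HasDerivAt (hermiteR (n + 1)) ((n + 1) * hermiteR n x) x := by
  have h := (hermite (n + 1)).hasDerivAt_aeval x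
  rw [derivative_hermite_succ] at h
  exact h.congr_deriv (by simp [hermiteR])

end Hermite

section Gaussian

variable {E : Type*} [NormedAddCommGroup E] [NormedSpace ℝ E] {μ : ℝ} {v : ℝ≥0}

theorem integrable_gaussianReal_iff_integrable_smul {f : ℝ → E} (hv : v ≠ 0) :
    Integrable f (gaussianReal μ v) ↔ Integrable (fun y ↦ gaussianPDFReal μ v y • f y) := by
  simp [gaussianReal_of_var_ne_zero μ hv, integrable_withDensity_iff_integrable_smul'
    (measurable_gaussianPDF μ v) (ae_of_all _ fun _ ↦ gaussianPDF_lt_top)]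

theorem hasDerivAt_gaussianPDFReal (μ : ℝ) (v : ℝ≥0) (y : ℝ) :
    HasDerivAt (gaussianPDFReal μ v) (-((v : ℝ)⁻¹ * (y - μ) * gaussianPDFReal μ v y)) y := by
  have hexponent : HasDerivAt (fun z : ℝ ↦ -(z - μ) ^ 2 / (2 * v)) (-((v : ℝ)⁻¹ * (y - μ))) y :=
    ((((hasDerivAt_id y).sub_const μ).pow 2).neg.div_const (2 * (v : ℝ))).congr_deriv (by
      simp only [id_eq, Nat.cast_ofNat]
      ring)
  exact (hexponent.exp.const_mul (√(2 * Real.pi * v))⁻¹).congr_deriv (by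
    rw [gaussianPDFReal]
    ring)

/-- Stein's identity: the derivative of `gaussianPDFReal μ v • f` has integral zero. -/
theorem integral_sub_smul_gaussianReal {f f' : ℝ → E} (hderiv : ∀ y, HasDerivAt f (f' y) y)
    (hf : Integrable f (gaussianReal μ v)) (hf' : Integrable f' (gaussianReal μ v))
    (hsub : Integrable (fun y ↦ (y - μ) • f y) (gaussianReal μ v)) :
    ∫ y, (y - μ) • f y ∂gaussianReal μ v = (v : ℝ) • ∫ y, f' y ∂gaussianReal μ v := by
  by_cases hE : CompleteSpace E
  swap
  · simp [integral, hE]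
  obtain rfl | hv := eq_or_ne v 0
  · simp [gaussianReal_zero_var]
  have hv' : (v : ℝ) ≠ 0 := by exact_mod_cast hv
  have hdiff := hf'.sub (hsub.smul (v : ℝ)⁻¹)
  have hderiv_pdf (y : ℝ) : HasDerivAt (fun z ↦ gaussianPDFReal μ v z • f z)
      (gaussianPDFReal μ v y • (f' y - (v : ℝ)⁻¹ • (y - μ) • f y)) y :=
    ((hasDerivAt_gaussianPDFReal μ v y).smul (hderiv y)).congr_deriv (by module)
  have hzero : ∫ y, (f' y - (v : ℝ)⁻¹ • (y - μ) • f y) ∂gaussianReal μ v = 0 := by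
    rw [integral_gaussianReal_eq_integral_smul hv]
    exact integral_eq_zero_of_hasDerivAt_of_integrable hderiv_pdf
      ((integrable_gaussianReal_iff_integrable_smul hv).1 hdiff)
      ((integrable_gaussianReal_iff_integrable_smul hv).1 hf)
  rw [integral_sub hf' (hsub.fun_smul _), integral_smul, sub_eq_zero] at hzero
  rw [hzero, smul_inv_smul₀ hv']

theorem integrable_aeval_gaussianReal {R : Type*} [CommSemiring R] [Algebra R ℝ]
    (p : Polynomial R) (μ : ℝ) (v : ℝ≥0) :
    Integrable (fun y ↦ Polynomial.aeval y p) (gaussianReal μ v) := by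
  induction p using Polynomial.induction_on' with
  | add p q hp hq => simpa only [map_add] using hp.fun_add hq
  | monomial n c =>
    have hpow : Integrable (fun y : ℝ ↦ y ^ n) (gaussianReal μ v) :=
      integrable_pow_of_mem_interior_integrableExpSet (X := id) (by simp) n
    simpa only [Polynomial.aeval_monomial] using hpow.const_mul (algebraMap R ℝ c)

end Gaussian

theorem integrable_hermiteR_gaussianReal (n : ℕ) (m : ℝ) (v : ℝ≥0) :
    Integrable (hermiteR n) (gaussianReal m v) :=
  integrable_aeval_gaussianReal (Polynomial.hermite n) m v

theorem integral_hermiteR_succ_succ_gaussianReal (n : ℕ) (m : ℝ) (v : ℝ≥0) :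
    ∫ y, hermiteR (n + 2) y ∂gaussianReal m v =
      m * ∫ y, hermiteR (n + 1) y ∂gaussianReal m v -
        (n + 1) * (1 - v) * ∫ y, hermiteR n y ∂gaussianReal m v := by
  have hint (k : ℕ) := integrable_hermiteR_gaussianReal k m v
  have hsub_eq : (fun y ↦ (y - m) • hermiteR (n + 1) y) =
      fun y ↦ hermiteR (n + 2) y + (n + 1) * hermiteR n y - m * hermiteR (n + 1) y := by
    ext y
    rw [hermiteR_succ_succ, smul_eq_mul]
    ring
  have hadd := (hint (n + 2)).fun_add ((hint n).const_mul (n + 1))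
  have hstein := integral_sub_smul_gaussianReal (hasDerivAt_hermiteR_succ n) (hint (n + 1))
    ((hint n).const_mul (n + 1)) (hsub_eq ▸ hadd.sub ((hint (n + 1)).const_mul m))
  rw [hsub_eq, integral_sub hadd ((hint (n + 1)).const_mul m),
    integral_add (hint (n + 2)) ((hint n).const_mul (n + 1))] at hstein
  simp only [integral_const_mul, smul_eq_mul] at hstein
  linear_combination hstein

theorem integral_hermiteR_gaussianReal {a : ℝ} {v : ℝ≥0} (hav : a ^ 2 + v = 1) (k : ℕ) (x : ℝ) :
    ∫ y, hermiteR k y ∂gaussianReal (a * x) v = a ^ k * hermiteR k x := by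
  induction k using Nat.twoStepInduction with
  | zero => simp [hermiteR_zero]
  | one => simp [hermiteR_one]
  | more n ih ih_succ =>
    rw [integral_hermiteR_succ_succ_gaussianReal, ih, ih_succ, hermiteR_succ_succ]
    linear_combination ((n : ℝ) + 1) * a ^ n * hermiteR n x * hav

theorem integral_hermiteR_add_mul_gaussianReal {a b : ℝ} (hab : a ^ 2 + b ^ 2 = 1) (k : ℕ)
    (x : ℝ) :
    ∫ y, hermiteR k (a * x + b * y) ∂gaussianReal 0 1 = a ^ k * hermiteR k x := by
  have hlaw : HasLaw (fun y ↦ a * x + b * y) (gaussianReal (a * x) (.mk (b ^ 2) (sq_nonneg b)))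
      (gaussianReal 0 1) := by
    simpa using gaussianReal_const_add
      (gaussianReal_const_mul (HasLaw.id (μ := gaussianReal 0 1)) b) (a * x)
  calc
    _ = ∫ y, hermiteR k y ∂gaussianReal (a * x) (.mk (b ^ 2) (sq_nonneg b)) :=
      hlaw.integral_comp (integrable_hermiteR_gaussianReal k _ _).aestronglyMeasurable
    _ = a ^ k * hermiteR k x := integral_hermiteR_gaussianReal hab k x

/-- Mehler's formula / Ornstein–Uhlenbeck semigroup on Hermite polynomials:
`P_t H_k = e^{-kt} H_k`, i.e.
`∫ H_k(e^{-t} x + √(1 - e^{-2t}) y) ν(dy) = e^{-kt} H_k(x)`. -/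
theorem ou_semigroup_hermite (t : ℝ) (ht : 0 ≤ t) (k : ℕ) (x : ℝ) :
    ∫ y, hermiteR k (Real.exp (-t) * x + Real.sqrt (1 - Real.exp (-(2 * t))) * y) ∂stdGaussian
      = Real.exp (-(k : ℝ) * t) * hermiteR k x := by
  have hexp_sq : Real.exp (-t) ^ 2 = Real.exp (-(2 * t)) := by
    rw [← Real.exp_nat_mul, Nat.cast_ofNat, mul_neg]
  have hexp_pow : Real.exp (-t) ^ k = Real.exp (-(k : ℝ) * t) := by
    rw [← Real.exp_nat_mul, mul_neg, neg_mul]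
  have hexp_le : Real.exp (-(2 * t)) ≤ 1 := Real.exp_le_one_iff.mpr (by linarith)
  have hcoeff : Real.exp (-t) ^ 2 + √(1 - Real.exp (-(2 * t))) ^ 2 = 1 := by
    rw [Real.sq_sqrt (sub_nonneg.mpr hexp_le), hexp_sq, add_sub_cancel]
  rw [← hexp_pow]
  exact integral_hermiteR_add_mul_gaussianReal hcoeff k x

end
end

section
/- Let r ∈ (0, 1), let a : ℝ → ℝ be measurable with r ≤ a(x) ≤ 1/r for all x, let ε > 0, let f : [0,1] → ℝ be continuous with F(x) = ∫_0^x f(y) dy, let b ∈ ℝ and let a* > 0 be a constant. Set q(x) = 1/a(x) − 1/a*, c* = a* b + ∫_0^1 F(y) dy, c^ε = ( b + ∫_0^1 F(y)/a(y/ε) dy ) / ( ∫_0^1 1/a(y/ε) dy ), u^ε(x) = c^ε ∫_0^x 1/a(y/ε) dy − ∫_0^x F(y)/a(y/ε) dy, ū(x) = c* x / a* − ∫_0^x F(y)/a* dy, F(x, y) = (c* − F(y)) 1_{[0,x]}(y) + x ( F(y) − ∫_0^1 F(z) dz − a* b ) 1_{[0,1]}(y), and ρ^ε = ( a* / ∫_0^1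 a(y/ε)^{−1} dy ) [ ( a* b + ∫_0^1 F(y) dy )( ∫_0^1 q(y/ε) dy )² − ( ∫_0^1 F(y) q(y/ε) dy )( ∫_0^1 q(y/ε) dy ) ]. Then for every x ∈ [0,1], u^ε(x) − ū(x) = ∫_ℝ F(x, y) q(y/ε) dy + (c^ε − c*) ∫_0^x q(y/ε) dy + ρ^ε x / a*. -/
open MeasureTheory Filter Set
open scoped Topology

noncomputable section

/-!
On an interval `[s, t]` the solution of `-(u' / w)' = f`, `u s = 0`, `u t = b`, has flux
`u' / w = c - F`, where `F` is a primitive of `f` and the constant `c` is fixed by the boundary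
value at `t`. Both `uᵉ` and `ū` are of this form, for the weights `w = 1 / a(·/ε)` and
`v = 1 / a*`, so with `q = w - v` and `c, c*` the two flux constants

`uᵉ - ū = ∫_0^x (c* - F) q + (c - c*) ∫_0^x q + (c - c*) ∫_0^x v`.

Subtracting the two boundary conditions at `1` gives `(c - c*) ∫ w = ∫ (F - c*) q`, and replacing
`∫ w` by `∫ v = ∫ w - ∫ q` on the left turns the last term into the second part of the kernel
integral plus a remainder that is quadratic in `q`.
-/

lemma integral_mul_indicator_Icc {g : ℝ → ℝ} {s t : ℝ} (hst : s ≤ t) :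
    ∫ y, g y * indicator (Icc s t) (fun _ => (1 : ℝ)) y = ∫ y in s..t, g y := by
  simp_rw [← indicator_mul_right, mul_one]
  rw [integral_indicator measurableSet_Icc, integral_Icc_eq_integral_Ioc,
    intervalIntegral.integral_of_le hst]

lemma integrable_mul_indicator_Icc {g : ℝ → ℝ} {s t : ℝ} (hst : s ≤ t)
    (hg : IntervalIntegrable g volume s t) :
    Integrable fun y => g y * indicator (Icc s t) (fun _ => (1 : ℝ)) y := by
  simp_rw [← indicator_mul_right, mul_one]
  exact ((intervalIntegrable_iff_integrableOn_Icc_of_le hst).1 hg).integrable_indicator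
    measurableSet_Icc

lemma integral_indicator_Icc_sub_mul {g q : ℝ → ℝ} {s t x : ℝ} (θ : ℝ) (hx : x ∈ Icc s t)
    (hg : IntervalIntegrable (fun y => g y * q y) volume s t) :
    ∫ y, (g y * indicator (Icc s x) (fun _ => (1 : ℝ)) y
        - θ * g y * indicator (Icc s t) (fun _ => (1 : ℝ)) y) * q y =
      (∫ y in s..x, g y * q y) - θ * ∫ y in s..t, g y * q y := by
  have hst : s ≤ t := hx.1.trans hx.2
  have hgx : IntervalIntegrable (fun y => g y * q y) volume s x :=
    hg.mono_set (uIcc_subset_uIcc_left (Icc_subset_uIcc hx))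
  rw [← integral_mul_indicator_Icc hx.1, ← integral_mul_indicator_Icc hst,
    ← integral_const_mul, ← integral_sub (integrable_mul_indicator_Icc hx.1 hgx)
      ((integrable_mul_indicator_Icc hst hg).const_mul θ)]
  congr 1 with y
  ring

/-- The constant `c` in the flux `u' / w = c - F` of the solution of `-(u' / w)' = F'`, `u s = 0`,
`u t = b`. The equation is parametrised by the reciprocal `w` of its coefficient. -/
def fluxConstant (w F : ℝ → ℝ) (s t b : ℝ) : ℝ :=
  (b + ∫ y in s..t, F y * w y) / ∫ y in s..t, w y

/-- The solution of the two-point boundary value problem `-(u' / w)' = F'`, `u s = 0`, `u t = b`,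
in its explicit form. -/
def twoPointSolution (w F : ℝ → ℝ) (s t b x : ℝ) : ℝ :=
  fluxConstant w F s t b * (∫ y in s..x, w y) - ∫ y in s..x, F y * w y

section TwoPointProblem

variable {w v F : ℝ → ℝ} {s t b x k : ℝ}

lemma fluxConstant_mul_integral (hw : ∫ y in s..t, w y ≠ 0) :
    fluxConstant w F s t b * (∫ y in s..t, w y) = b + ∫ y in s..t, F y * w y :=
  div_mul_cancel₀ _ hw

lemma fluxConstant_const (hk : k ≠ 0) :
    fluxConstant (fun _ => 1 / k) F s t b = (k * b + ∫ y in s..t, F y) / (t - s) := by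
  rw [fluxConstant, intervalIntegral.integral_mul_const, intervalIntegral.integral_const,
    smul_eq_mul, ← mul_div_mul_right (k * b + _) (t - s) (one_div_ne_zero hk)]
  congr 1
  field_simp

lemma twoPointSolution_const :
    twoPointSolution (fun _ => 1 / k) F s t b x =
      fluxConstant (fun _ => 1 / k) F s t b * (x - s) / k - ∫ y in s..x, F y / k := by
  simp only [twoPointSolution, intervalIntegral.integral_const, smul_eq_mul, mul_one_div,
    mul_div_assoc]

lemma integral_const_sub_mul {q : ℝ → ℝ} (c : ℝ) (hq : IntervalIntegrable q volume s t)
    (hFq : IntervalIntegrable (fun y => F y * q y) volume s t) :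
    ∫ y in s..t, (c - F y) * q y = c * (∫ y in s..t, q y) - ∫ y in s..t, F y * q y := by
  simp_rw [sub_mul]
  rw [intervalIntegral.integral_sub (hq.const_mul c) hFq, intervalIntegral.integral_const_mul]

lemma integral_const_sub_mul_sub (c : ℝ)
    (hw : IntervalIntegrable w volume s t) (hv : IntervalIntegrable v volume s t)
    (hFw : IntervalIntegrable (fun y => F y * w y) volume s t)
    (hFv : IntervalIntegrable (fun y => F y * v y) volume s t) :
    ∫ y in s..t, (c - F y) * (w y - v y) =
      c * ((∫ y in s..t, w y) - ∫ y in s..t, v y)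
        - ((∫ y in s..t, F y * w y) - ∫ y in s..t, F y * v y) := by
  have hFq : IntervalIntegrable (fun y => F y * (w y - v y)) volume s t := by
    simpa only [mul_sub] using hFw.sub hFv
  rw [integral_const_sub_mul c (hw.sub hv) hFq, intervalIntegral.integral_sub hw hv]
  simp_rw [mul_sub]
  rw [intervalIntegral.integral_sub hFw hFv]

lemma twoPointSolution_sub_twoPointSolution
    (hw : IntervalIntegrable w volume s x) (hv : IntervalIntegrable v volume s x)
    (hFw : IntervalIntegrable (fun y => F y * w y) volume s x)
    (hFv : IntervalIntegrable (fun y => F y * v y) volume s x) :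
    twoPointSolution w F s t b x - twoPointSolution v F s t b x =
      (∫ y in s..x, (fluxConstant v F s t b - F y) * (w y - v y))
        + (fluxConstant w F s t b - fluxConstant v F s t b) * (∫ y in s..x, (w y - v y))
        + (fluxConstant w F s t b - fluxConstant v F s t b) * ∫ y in s..x, v y := by
  rw [integral_const_sub_mul_sub _ hw hv hFw hFv, intervalIntegral.integral_sub hw hv,
    twoPointSolution, twoPointSolution]
  ring

lemma fluxConstant_sub_mul_integral
    (hw : IntervalIntegrable w volume s t) (hv : IntervalIntegrable v volume s t)
    (hFw : IntervalIntegrable (fun y => F y * w y) volume s t)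
    (hFv : IntervalIntegrable (fun y => F y * v y) volume s t)
    (hw₀ : ∫ y in s..t, w y ≠ 0) (hv₀ : ∫ y in s..t, v y ≠ 0) :
    (fluxConstant w F s t b - fluxConstant v F s t b) * (∫ y in s..t, w y) =
      -∫ y in s..t, (fluxConstant v F s t b - F y) * (w y - v y) := by
  rw [integral_const_sub_mul_sub _ hw hv hFw hFv]
  linear_combination fluxConstant_mul_integral (F := F) (b := b) hw₀
    - fluxConstant_mul_integral (F := F) (b := b) hv₀

lemma fluxConstant_sub_mul_integral_right
    (hw : IntervalIntegrable w volume s t) (hv : IntervalIntegrable v volume s t)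
    (hFw : IntervalIntegrable (fun y => F y * w y) volume s t)
    (hFv : IntervalIntegrable (fun y => F y * v y) volume s t)
    (hw₀ : ∫ y in s..t, w y ≠ 0) (hv₀ : ∫ y in s..t, v y ≠ 0) :
    (fluxConstant w F s t b - fluxConstant v F s t b) * (∫ y in s..t, v y) =
      (∫ y in s..t, (fluxConstant v F s t b - F y) * (w y - v y))
        * ((∫ y in s..t, (w y - v y)) / (∫ y in s..t, w y) - 1) := by
  have hdiff := fluxConstant_sub_mul_integral (b := b) hw hv hFw hFv hw₀ hv₀
  rw [intervalIntegral.integral_sub hw hv, ← neg_eq_iff_eq_neg.mpr hdiff]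
  field_simp
  ring

lemma twoPointSolution_sub_eq_integral_kernel {θ : ℝ} (hx : x ∈ Icc s t)
    (hθ : ∫ y in s..x, v y = θ * ∫ y in s..t, v y)
    (hw : IntervalIntegrable w volume s t) (hv : IntervalIntegrable v volume s t)
    (hFw : IntervalIntegrable (fun y => F y * w y) volume s t)
    (hFv : IntervalIntegrable (fun y => F y * v y) volume s t)
    (hw₀ : ∫ y in s..t, w y ≠ 0) (hv₀ : ∫ y in s..t, v y ≠ 0) :
    twoPointSolution w F s t b x - twoPointSolution v F s t b x =
      (∫ y, ((fluxConstant v F s t b - F y) * indicator (Icc s x) (fun _ => (1 : ℝ)) y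
          - θ * (fluxConstant v F s t b - F y) * indicator (Icc s t) (fun _ => (1 : ℝ)) y)
            * (w y - v y))
        + (fluxConstant w F s t b - fluxConstant v F s t b) * (∫ y in s..x, (w y - v y))
        + θ * ((∫ y in s..t, (fluxConstant v F s t b - F y) * (w y - v y))
          * ((∫ y in s..t, (w y - v y)) / ∫ y in s..t, w y)) := by
  have hsub : uIcc s x ⊆ uIcc s t := uIcc_subset_uIcc_left (Icc_subset_uIcc hx)
  have hkernel : IntervalIntegrable
      (fun y => (fluxConstant v F s t b - F y) * (w y - v y)) volume s t := by
    refine (((hw.sub hv).const_mul (fluxConstant v F s t b)).sub (hFw.sub hFv)).congr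
      fun y _ => ?_
    ring
  rw [twoPointSolution_sub_twoPointSolution (hw.mono_set hsub) (hv.mono_set hsub)
    (hFw.mono_set hsub) (hFv.mono_set hsub), integral_indicator_Icc_sub_mul θ hx hkernel, hθ]
  linear_combination θ * fluxConstant_sub_mul_integral_right (b := b) hw hv hFw hFv hw₀ hv₀

end TwoPointProblem

lemma intervalIntegrable_one_div_of_le {a : ℝ → ℝ} {r s t : ℝ} (hr : 0 < r) (ha : Measurable a)
    (hra : ∀ y, r ≤ a y) : IntervalIntegrable (fun y => 1 / a y) volume s t := by
  refine (intervalIntegrable_const (c := 1 / r)).mono_fun'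
    (measurable_const.div ha).aestronglyMeasurable (Eventually.of_forall fun y => ?_)
  beta_reduce
  rw [Real.norm_of_nonneg (one_div_nonneg.2 (hr.le.trans (hra y)))]
  exact one_div_le_one_div_of_le hr (hra y)

theorem corrector_decomposition_general
    {a : ℝ → ℝ} (hapos : ∀ y ∈ Ioo (0 : ℝ) 1, 0 < a y)
    (haint : IntervalIntegrable (fun y => 1 / a y) volume 0 1)
    {f : ℝ → ℝ} (hf : IntervalIntegrable f volume 0 1) {b astar : ℝ} (hastar : astar ≠ 0)
    {F : ℝ → ℝ} (hF : ∀ x, F x = ∫ y in (0 : ℝ)..x, f y)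
    {q : ℝ → ℝ} (hq : ∀ y, q y = 1 / a y - 1 / astar)
    {cstar : ℝ} (hcstar : cstar = astar * b + ∫ y in (0 : ℝ)..1, F y)
    {c : ℝ} (hc : c = (b + ∫ y in (0 : ℝ)..1, F y / a y) / ∫ y in (0 : ℝ)..1, 1 / a y)
    {u : ℝ → ℝ}
    (hu : ∀ x, u x = c * (∫ y in (0 : ℝ)..x, 1 / a y) - ∫ y in (0 : ℝ)..x, F y / a y)
    {ubar : ℝ → ℝ}
    (hubar : ∀ x, ubar x = cstar * x / astar - ∫ y in (0 : ℝ)..x, F y / astar)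
    {Fk : ℝ → ℝ → ℝ}
    (hFk : ∀ x y, Fk x y =
      (cstar - F y) * indicator (Icc 0 x) (fun _ => (1 : ℝ)) y
        + x * (F y - (∫ z in (0 : ℝ)..1, F z) - astar * b)
            * indicator (Icc (0 : ℝ) 1) (fun _ => (1 : ℝ)) y)
    {ρ : ℝ}
    (hρ : ρ = (astar / ∫ y in (0 : ℝ)..1, 1 / a y) *
      ((astar * b + ∫ y in (0 : ℝ)..1, F y) * (∫ y in (0 : ℝ)..1, q y) ^ 2
        - (∫ y in (0 : ℝ)..1, F y * q y) * ∫ y in (0 : ℝ)..1, q y)) :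
    ∀ x ∈ Icc (0 : ℝ) 1,
      u x - ubar x = (∫ y, Fk x y * q y) + (c - cstar) * (∫ y in (0 : ℝ)..x, q y)
        + ρ * x / astar := by
  intro x hx
  have hFcont : ContinuousOn F (uIcc 0 1) :=
    (intervalIntegral.continuousOn_primitive_interval' hf left_mem_uIcc).congr fun y _ => hF y
  have hw₀ : ∫ y in (0 : ℝ)..1, 1 / a y ≠ 0 :=
    (intervalIntegral.intervalIntegral_pos_of_pos_on haint (fun y hy => one_div_pos.2 (hapos y hy))
      zero_lt_one).ne'
  have hc_flux : fluxConstant (fun y => 1 / a y) F 0 1 b = c := by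
    simp only [hc, fluxConstant, mul_one_div]
  have hcstar_flux : fluxConstant (fun _ => 1 / astar) F 0 1 b = cstar := by
    rw [fluxConstant_const hastar, hcstar, sub_zero, div_one]
  have hu_sol : twoPointSolution (fun y => 1 / a y) F 0 1 b x = u x := by
    simp only [hu, twoPointSolution, hc_flux, mul_one_div]
  have hubar_sol : twoPointSolution (fun _ => 1 / astar) F 0 1 b x = ubar x := by
    rw [twoPointSolution_const, hcstar_flux, hubar, sub_zero]
  have hqint : IntervalIntegrable q volume 0 1 :=
    (haint.sub intervalIntegrable_const).congr fun y _ => (hq y).symm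
  have hFq : ∫ y in (0 : ℝ)..1, (cstar - F y) * q y =
      cstar * (∫ y in (0 : ℝ)..1, q y) - ∫ y in (0 : ℝ)..1, F y * q y :=
    integral_const_sub_mul cstar hqint (hqint.continuousOn_mul hFcont)
  have hFk_factor : ∀ y, Fk x y = (cstar - F y) * indicator (Icc 0 x) (fun _ => (1 : ℝ)) y
      - x * (cstar - F y) * indicator (Icc 0 1) (fun _ => (1 : ℝ)) y := fun y => by
    rw [hFk, hcstar]
    ring
  have hsplit := twoPointSolution_sub_eq_integral_kernel (v := fun _ => 1 / astar) (b := b) (θ := x)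
    hx (by simp) haint intervalIntegrable_const (haint.continuousOn_mul hFcont)
    (intervalIntegrable_const.continuousOn_mul hFcont) hw₀ (by simpa using hastar)
  simp only [hu_sol, hubar_sol, hc_flux, hcstar_flux, ← hq, hFq, ← hFk_factor] at hsplit
  rw [hsplit, hρ, ← hcstar]
  field_simp

/-- Decomposition of the corrector `uᵉ - ū` into the leading oscillatory-integral term
`∫_ℝ F(x,y) q(y/ε) dy`, the term `(cᵉ - c*) ∫_0^x q(y/ε) dy` and the remainder `ρᵉ x / a*`. -/
theorem corrector_decomposition
    (r : ℝ) (hr : r ∈ Set.Ioo (0 : ℝ) 1)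
    (a : ℝ → ℝ) (hameas : Measurable a) (ha : ∀ x, r ≤ a x ∧ a x ≤ 1 / r)
    (ε : ℝ) (hε : 0 < ε)
    (f : ℝ → ℝ) (hf : ContinuousOn f (Set.Icc 0 1)) (b : ℝ)
    (astar : ℝ) (hastar : 0 < astar)
    (F : ℝ → ℝ) (hF : ∀ x, F x = ∫ y in (0 : ℝ)..x, f y)
    (q : ℝ → ℝ) (hq : ∀ x, q x = 1 / a x - 1 / astar)
    (cstar : ℝ) (hcstar : cstar = astar * b + ∫ y in (0 : ℝ)..1, F y)
    (cε : ℝ)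
    (hcε : cε = (b + ∫ y in (0 : ℝ)..1, F y / a (y / ε)) / (∫ y in (0 : ℝ)..1, 1 / a (y / ε)))
    (uε : ℝ → ℝ)
    (huε : ∀ x, uε x =
      cε * (∫ y in (0 : ℝ)..x, 1 / a (y / ε)) - ∫ y in (0 : ℝ)..x, F y / a (y / ε))
    (ubar : ℝ → ℝ)
    (hubar : ∀ x, ubar x = cstar * x / astar - ∫ y in (0 : ℝ)..x, F y / astar)
    (Fk : ℝ → ℝ → ℝ)
    (hFk : ∀ x y, Fk x y =
      (cstar - F y) * Set.indicator (Set.Icc 0 x) (fun _ => (1 : ℝ)) y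
        + x * (F y - (∫ z in (0 : ℝ)..1, F z) - astar * b)
            * Set.indicator (Set.Icc (0 : ℝ) 1) (fun _ => (1 : ℝ)) y)
    (ρε : ℝ)
    (hρε : ρε = (astar / ∫ y in (0 : ℝ)..1, 1 / a (y / ε)) *
      ((astar * b + ∫ y in (0 : ℝ)..1, F y) * (∫ y in (0 : ℝ)..1, q (y / ε)) ^ 2
        - (∫ y in (0 : ℝ)..1, F y * q (y / ε)) * (∫ y in (0 : ℝ)..1, q (y / ε)))) :
    ∀ x ∈ Set.Icc (0 : ℝ) 1,
      uε x - ubar x = (∫ y, Fk x y * q (y / ε))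
        + (cε - cstar) * (∫ y in (0 : ℝ)..x, q (y / ε)) + ρε * x / astar :=
  corrector_decomposition_general (fun y _ => hr.1.trans_le (ha (y / ε)).1)
    (intervalIntegrable_one_div_of_le hr.1 (hameas.comp (measurable_id.div_const ε))
      fun y => (ha (y / ε)).1)
    (hf.intervalIntegrable_of_Icc zero_le_one) hastar.ne' hF (fun y => hq (y / ε)) hcstar hcε huε
    hubar hFk hρε

end
end
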